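/- Let k ∈ {0,1}, p > 1, and f, g ∈ ℓ^{2,k}(ℤ^d). Consider the focusing semilinear wave equation ∂_t² u − Δu = |u|^{p−1}u on ℤ^d with initial data u(·,0) = εf, ∂_t u(·,0) = εg. Then there exists a constant K > 0 (depending on p, f, g, d) such that for all sufficiently small ε > 0 the maximal existence time of the solution in C²([0,T]; ℓ^{2,k}(ℤ^d)) satisfies T*(ε) ≥ K·(1/ε)^{(p−1)/(p+1)}. -/

import Mathlib

/-!
Freezing the coefficient `|u|^{p-1}` at the value `A^{p-1}` where `|u| ≥ A` makes the nonlinearity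
globally Lipschitz on the Banach space `ℓ^{2,k}`, so the truncated equation has a solution for all
times. As `-Δ` is positive on `ℓ²`, the energy `‖u'‖² - ⟪Δu, u⟫` grows at a rate of at most
`2 |μ| p A^{p-1} ‖u‖ ‖u'‖`, whence `‖u(t)‖ ≤ 2 (‖u(0)‖ + T √E(0))` on `[0, T]` as long as
`4 |μ| p A^{p-1} T² ≤ 1`. If the right-hand side is at most `A`, the truncation is never active,
because `|u(t, x)| ≤ ‖u(t)‖`. For data of size `ε` take `A` proportional to `ε R` and `T` to `R`,
where `R = (1/ε)^{(p-1)/(p+1)}` solves `(ε R)^{p-1} R² = 1`.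
-/

open scoped BigOperators ENNReal NNReal
open MeasureTheory Filter

noncomputable section

/-- Kernel `φⱼ` of the discrete partial derivative on `ℤ^d`:
`φⱼ(m) = -4i/(π(4a²-1))` if `m = a·eⱼ`, and `0` otherwise. -/
def phi (d : ℕ) (j : Fin d) (m : Fin d → ℤ) : ℂ :=
  if ∀ i, i ≠ j → m i = 0 then
    (-4 * Complex.I) / ((Real.pi : ℂ) * (4 * (m j : ℂ) ^ 2 - 1))
  else 0

/-- Discrete convolution on `ℤ^d`. -/
def dconv {d : ℕ} (u v : (Fin d → ℤ) → ℂ) (k : Fin d → ℤ) : ℂ :=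
  ∑' m, u m * v (k - m)

/-- Discrete partial derivative `∂ⱼ u = u ∗ φⱼ`. -/
def pd {d : ℕ} (j : Fin d) (u : (Fin d → ℤ) → ℂ) : (Fin d → ℤ) → ℂ :=
  dconv u (phi d j)

/-- Japanese bracket `⟨m⟩ = (1+|m|²)^{1/2}`. -/
def jap {d : ℕ} (m : Fin d → ℤ) : ℝ :=
  Real.sqrt (1 + ∑ i, ((m i : ℝ)) ^ 2)

open scoped Classical in
/-- `ℓ^p` norm on `ℤ^d` (valued in `ℝ≥0∞`), `1 ≤ p ≤ ∞`. -/
def lpn {d : ℕ} (p : ℝ≥0∞) (f : (Fin d → ℤ) → ℂ) : ℝ≥0∞ :=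
  if p = ⊤ then ⨆ m, (‖f m‖₊ : ℝ≥0∞)
  else (∑' m, (‖f m‖₊ : ℝ≥0∞) ^ p.toReal) ^ (1 / p.toReal)

/-- Weighted `ℓ^{2,k}` norm: the `ℓ²` norm of `m ↦ ⟨m⟩^k f(m)`. -/
def w2 {d : ℕ} (k : ℕ) (f : (Fin d → ℤ) → ℂ) : ℝ≥0∞ :=
  lpn 2 (fun m => ((jap m ^ k : ℝ) : ℂ) * f m)

/-- Discrete Laplacian on `ℤ^d`. -/
def lap {d : ℕ} (u : (Fin d → ℤ) → ℂ) (x : Fin d → ℤ) : ℂ :=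
  ∑ j, (u (x + Pi.single j 1) + u (x - Pi.single j 1) - 2 * u x)

/-- Continuity of a curve `t ↦ f(·,t)` into `ℓ^{2,k}(ℤ^d)` on a set `S` of times. -/
def ContW {d : ℕ} (k : ℕ) (S : Set ℝ) (f : ℝ → (Fin d → ℤ) → ℂ) : Prop :=
  ∀ t ∈ S, Tendsto (fun s => w2 k (fun m => f s m - f t m))
    (nhdsWithin t S) (nhds (0 : ℝ≥0∞))

/-- `f'` is the derivative (in the `ℓ^{2,k}(ℤ^d)` norm) of the curve `t ↦ f(·,t)` on `S`. -/
def DerivW {d : ℕ} (k : ℕ) (S : Set ℝ) (f f' : ℝ → (Fin d → ℤ) → ℂ) : Prop :=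
  ∀ t ∈ S, Tendsto
    (fun s => w2 k (fun m => (s - t)⁻¹ • (f s m - f t m) - f' t m))
    (nhdsWithin t (S \ {t})) (nhds (0 : ℝ≥0∞))

/-- `u ∈ C²(S; ℓ^{2,k}(ℤ^d))`, with first and second time derivatives `u1`, `u2`. -/
structure IsC2 {d : ℕ} (k : ℕ) (S : Set ℝ) (u u1 u2 : ℝ → (Fin d → ℤ) → ℂ) : Prop where
  mem0 : ∀ t ∈ S, w2 k (u t) < ⊤
  mem1 : ∀ t ∈ S, w2 k (u1 t) < ⊤
  mem2 : ∀ t ∈ S, w2 k (u2 t) < ⊤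
  cont0 : ContW k S u
  cont1 : ContW k S u1
  cont2 : ContW k S u2
  hder1 : DerivW k S u u1
  hder2 : DerivW k S u1 u2

/-- `u` (with time derivatives `u1`, `u2`) is a classical solution in
`C²(S; ℓ^{2,k}(ℤ^d))` of the power-nonlinearity wave equation
`∂ₜ²u - Δu = μ|u|^{p-1}u` with data `u(·,0)=f`, `∂ₜu(·,0)=g`. -/
def PSol (d k : ℕ) (p μ : ℝ) (f g : (Fin d → ℤ) → ℂ)
    (S : Set ℝ) (u u1 u2 : ℝ → (Fin d → ℤ) → ℂ) : Prop :=
  IsC2 k S u u1 u2 ∧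
    (∀ t ∈ S, ∀ x,
      u2 t x - lap (u t) x = (μ : ℂ) * ((‖u t x‖ ^ (p - 1) : ℝ) : ℂ) * u t x) ∧
    (∀ x, u 0 x = f x) ∧ (∀ x, u1 0 x = g x)

/-! ### Globally Lipschitz differential equations -/

section ODE

variable {E : Type*} [NormedAddCommGroup E] [NormedSpace ℝ E]

lemma isIntegralCurveOn_Icc_trans {v : ℝ → E → E} {α β : ℝ → E} {a b c : ℝ} (hab : a ≤ b)
    (hbc : b ≤ c) (hα : IsIntegralCurveOn α v (Set.Icc a b))
    (hβ : IsIntegralCurveOn β v (Set.Icc b c)) (h : α b = β b) :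
    IsIntegralCurveOn (fun t ↦ if t ≤ b then α t else β t) v (Set.Icc a c) := by
  set γ : ℝ → E := fun t ↦ if t ≤ b then α t else β t with hγ
  have hγα : ∀ t ∈ Set.Icc a b, γ t = α t := fun t ht ↦ if_pos ht.2
  have hγβ : ∀ t ∈ Set.Icc b c, γ t = β t := by
    intro t ht
    rcases ht.1.eq_or_lt with rfl | hbt
    · simp [hγ, h]
    · exact if_neg hbt.not_ge
  rw [← Set.Icc_union_Icc_eq_Icc hab hbc]
  refine fun t _ ↦ HasDerivWithinAt.union ?_ ?_
  · by_cases ht : t ∈ Set.Icc a b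
    · rw [hγα t ht]
      exact (hα t ht).congr hγα (hγα t ht)
    · exact HasFDerivWithinAt.of_notMem_closure (by rwa [isClosed_Icc.closure_eq])
  · by_cases ht : t ∈ Set.Icc b c
    · rw [hγβ t ht]
      exact (hβ t ht).congr hγβ (hγβ t ht)
    · exact HasFDerivWithinAt.of_notMem_closure (by rwa [isClosed_Icc.closure_eq])

variable [CompleteSpace E] {F : E → E} {K : ℝ≥0}

-- On the ball of radius `a` about `x` one has `‖F‖ ≤ ‖F x‖ + K a`, and `a = 2 ‖F x‖ (c - b)`
-- absorbs `(c - b) (‖F x‖ + K a)`.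
lemma exists_isIntegralCurveOn_Icc_of_mul_le_half (hF : LipschitzWith K F) {b c : ℝ} (hbc : b ≤ c)
    (hK : K * (c - b) ≤ 1 / 2) (x : E) :
    ∃ α : ℝ → E, α b = x ∧ IsIntegralCurveOn α (fun _ ↦ F) (Set.Icc b c) := by
  obtain ⟨τ, rfl⟩ : ∃ τ : ℝ≥0, c = b + τ := ⟨(c - b).toNNReal, by simp [hbc]⟩
  have hPL : IsPicardLindelof (fun _ ↦ F) (tmin := b) (tmax := b + τ) ⟨b, by simp⟩ x
      (2 * ‖F x‖₊ * τ) 0 (‖F x‖₊ + K * (2 * ‖F x‖₊ * τ)) K := by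
    refine .of_time_independent (fun y hy ↦ ?_) hF.lipschitzOnWith ?_
    · have hdist : ‖F y - F x‖ ≤ K * ↑(2 * ‖F x‖₊ * τ) := by
        rw [← dist_eq_norm]
        exact (hF.dist_le_mul y x).trans (by gcongr; exact hy)
      exact (norm_le_norm_add_norm_sub' _ _).trans (add_le_add_right hdist _)
    · have hx : 2 * ‖F x‖ * τ * (K * τ) ≤ 2 * ‖F x‖ * τ * (1 / 2) := by
        gcongr
        simpa using hK
      simp only [add_sub_cancel_left, sub_self, max_eq_left τ.coe_nonneg, NNReal.coe_add,
        NNReal.coe_mul, NNReal.coe_ofNat, coe_nnnorm, NNReal.coe_zero]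
      linarith
  exact hPL.exists_eq_forall_mem_Icc_hasDerivWithinAt₀

lemma exists_isIntegralCurveOn_Icc_natCast_mul (hF : LipschitzWith K F) (x : E) {τ : ℝ}
    (hτ₀ : 0 ≤ τ) (hτ : K * τ ≤ 1 / 2) (n : ℕ) :
    ∃ α : ℝ → E, α 0 = x ∧ IsIntegralCurveOn α (fun _ ↦ F) (Set.Icc 0 (n * τ)) := by
  induction n with
  | zero =>
    simpa using exists_isIntegralCurveOn_Icc_of_mul_le_half hF (le_refl (0 : ℝ)) (by simp) x
  | succ n ih =>
    obtain ⟨α, hα₀, hα⟩ := ih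
    have hn : 0 ≤ n * τ := by positivity
    have hstep : n * τ ≤ (n + 1 : ℕ) * τ := by gcongr; simp
    obtain ⟨β, hβ₀, hβ⟩ := exists_isIntegralCurveOn_Icc_of_mul_le_half hF hstep
      (by convert hτ using 1; push_cast; ring) (α (n * τ))
    exact ⟨_, (if_pos hn).trans hα₀, isIntegralCurveOn_Icc_trans hn hstep hα hβ hβ₀.symm⟩

theorem exists_isIntegralCurveOn_Icc_of_lipschitzWith (hF : LipschitzWith K F) (x : E) (T : ℝ) :
    ∃ α : ℝ → E, α 0 = x ∧ IsIntegralCurveOn α (fun _ ↦ F) (Set.Icc 0 T) := by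
  have hτ : (0 : ℝ) < 1 / (2 * (K + 1)) := by positivity
  obtain ⟨n, hn⟩ := Archimedean.arch T hτ
  rw [nsmul_eq_mul] at hn
  have hKτ : K * (1 / (2 * (K + 1)) : ℝ) ≤ 1 / 2 := by
    rw [mul_one_div, div_le_div_iff₀ (by positivity) two_pos]
    linarith
  obtain ⟨α, hα₀, hα⟩ := exists_isIntegralCurveOn_Icc_natCast_mul hF x hτ.le hKτ n
  exact ⟨α, hα₀, hα.mono (Set.Icc_subset_Icc_right hn)⟩

end ODE

/-! ### Second-order equations -/

section Wave

variable {X Y : Type*} [NormedAddCommGroup X] [NormedSpace ℝ X] [NormedAddCommGroup Y]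
  [NormedSpace ℝ Y] {L : X →L[ℝ] X} {N : X → X} {S : Set ℝ} {u v : ℝ → X}

/-- `u` solves the abstract semilinear wave equation `u'' = L u + N(u)` on the time set `S`. It is
recorded together with its velocity `v`, as a solution of the first-order system. -/
structure SolvesWaveOn (L : X →L[ℝ] X) (N : X → X) (S : Set ℝ) (u v : ℝ → X) : Prop where
  hasDerivWithinAt_fst : ∀ t ∈ S, HasDerivWithinAt u (v t) S t
  hasDerivWithinAt_snd : ∀ t ∈ S, HasDerivWithinAt v (L (u t) + N (u t)) S t

namespace SolvesWaveOn

lemma continuousOn_fst (h : SolvesWaveOn L N S u v) : ContinuousOn u S :=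
  fun t ht ↦ (h.hasDerivWithinAt_fst t ht).continuousWithinAt

lemma continuousOn_snd (h : SolvesWaveOn L N S u v) : ContinuousOn v S :=
  fun t ht ↦ (h.hasDerivWithinAt_snd t ht).continuousWithinAt

lemma map (h : SolvesWaveOn L N S u v) {L' : Y →L[ℝ] Y} {N' : Y → Y} (J : X →L[ℝ] Y)
    (hL : ∀ x, J (L x) = L' (J x)) (hN : ∀ x, J (N x) = N' (J x)) :
    SolvesWaveOn L' N' S (fun t ↦ J (u t)) (fun t ↦ J (v t)) where
  hasDerivWithinAt_fst t ht :=
    J.hasFDerivAt.comp_hasDerivWithinAt t (h.hasDerivWithinAt_fst t ht)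
  hasDerivWithinAt_snd t ht := by
    rw [← hL, ← hN, ← map_add]
    exact J.hasFDerivAt.comp_hasDerivWithinAt t (h.hasDerivWithinAt_snd t ht)

end SolvesWaveOn

theorem exists_solvesWaveOn_Icc [CompleteSpace X] (L : X →L[ℝ] X) {K : ℝ≥0}
    (hN : LipschitzWith K N) (f g : X) (T : ℝ) :
    ∃ u v : ℝ → X, SolvesWaveOn L N (Set.Icc 0 T) u v ∧ u 0 = f ∧ v 0 = g := by
  have hF : LipschitzWith _ fun z : X × X ↦ (z.2, L z.1 + N z.1) :=
    .prodMk .prod_snd ((L.lipschitz.add hN).comp .prod_fst)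
  obtain ⟨α, hα₀, hα⟩ := exists_isIntegralCurveOn_Icc_of_lipschitzWith hF (f, g) T
  refine ⟨fun t ↦ (α t).1, fun t ↦ (α t).2, ⟨fun t ht ↦ ?_, fun t ht ↦ ?_⟩,
    congrArg Prod.fst hα₀, congrArg Prod.snd hα₀⟩
  · exact (ContinuousLinearMap.fst ℝ X X).hasFDerivAt.comp_hasDerivWithinAt t (hα t ht)
  · exact (ContinuousLinearMap.snd ℝ X X).hasFDerivAt.comp_hasDerivWithinAt t (hα t ht)

end Wave

/-! ### Energy estimates -/

section Energy

variable {H : Type*} [NormedAddCommGroup H] [InnerProductSpace ℝ H] {L : H →L[ℝ] H} {N : H → H}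
  {S : Set ℝ} {T B : ℝ} {u v : ℝ → H}

open scoped RealInnerProductSpace

/-- The energy `‖v‖² - ⟪L u, u⟫` of the state `(u, v)`, conserved by the linear equation
`u'' = L u` when `L` is self-adjoint. -/
def waveEnergy (L : H →L[ℝ] H) (u v : H) : ℝ :=
  ‖v‖ ^ 2 - ⟪L u, u⟫

lemma waveEnergy_smul (L : H →L[ℝ] H) (c : ℝ) (u v : H) :
    waveEnergy L (c • u) (c • v) = c ^ 2 * waveEnergy L u v := by
  simp only [waveEnergy, map_smul, real_inner_smul_left, real_inner_smul_right, norm_smul, mul_pow,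
    Real.norm_eq_abs, sq_abs]
  ring

lemma sq_norm_le_waveEnergy (hL : (-L).IsPositive) (u v : H) : ‖v‖ ^ 2 ≤ waveEnergy L u v := by
  have hu : 0 ≤ ⟪(-L) u, u⟫ := hL.inner_nonneg_left u
  rw [neg_apply, inner_neg_left] at hu
  exact (le_sub_self_iff _).2 (neg_nonneg.1 hu)

lemma le_sqrt_add_of_sq_le {x c e : ℝ} (hc : 0 ≤ c) (h : x ^ 2 ≤ e + c * x) : x ≤ √e + c := by
  rcases le_total x c with hxc | hcx
  · exact hxc.trans (le_add_of_nonneg_left (Real.sqrt_nonneg e))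
  · refine sub_le_iff_le_add.1 (Real.le_sqrt_of_sq_le ?_)
    nlinarith [mul_nonneg hc (sub_nonneg.2 hcx)]

namespace SolvesWaveOn

lemma hasDerivWithinAt_waveEnergy (h : SolvesWaveOn L N S u v) (hL : (L : H →ₗ[ℝ] H).IsSymmetric)
    {t : ℝ} (ht : t ∈ S) :
    HasDerivWithinAt (fun s ↦ waveEnergy L (u s) (v s)) (2 * ⟪v t, N (u t)⟫) S t := by
  have hu := h.hasDerivWithinAt_fst t ht
  have hLu := (L.hasFDerivAt.comp_hasDerivWithinAt t hu).inner ℝ hu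
  refine ((h.hasDerivWithinAt_snd t ht).norm_sq.sub hLu).congr_deriv ?_
  have hsymm : ⟪L (v t), u t⟫ = ⟪v t, L (u t)⟫ := hL (v t) (u t)
  simp only [Function.comp_apply, hsymm, real_inner_comm (v t), inner_add_right]
  ring

lemma norm_snd_le (h : SolvesWaveOn L N (Set.Icc 0 T) u v) (hL : (-L).IsPositive)
    (hB : ∀ t ∈ Set.Icc 0 T, ‖N (u t)‖ ≤ B) {t : ℝ} (ht : t ∈ Set.Icc 0 T) :
    ‖v t‖ ≤ √(waveEnergy L (u 0) (v 0)) + 2 * B * T := by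
  have hT : 0 ≤ T := ht.1.trans ht.2
  have h₀ : (0 : ℝ) ∈ Set.Icc 0 T := ⟨le_rfl, hT⟩
  have hB₀ : 0 ≤ B := (norm_nonneg _).trans (hB 0 h₀)
  have hsymm : (L : H →ₗ[ℝ] H).IsSymmetric := fun x y ↦ by
    simpa using hL.inner_left_eq_inner_right x y
  obtain ⟨s, hs, hmax⟩ := isCompact_Icc.exists_isMaxOn ⟨0, h₀⟩ h.continuousOn_snd.norm
  have hder : ∀ r ∈ Set.Icc 0 T, ‖2 * ⟪v r, N (u r)⟫‖ ≤ 2 * B * ‖v s‖ := fun r hr ↦ by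
    calc ‖2 * ⟪v r, N (u r)⟫‖ ≤ 2 * (‖v r‖ * ‖N (u r)‖) := by
          rw [norm_mul, Real.norm_ofNat]
          gcongr
          exact norm_inner_le_norm _ _
      _ ≤ 2 * (‖v s‖ * B) := by
          gcongr
          exacts [hmax hr, hB r hr]
      _ = 2 * B * ‖v s‖ := by ring
  have henergy : waveEnergy L (u s) (v s) - waveEnergy L (u 0) (v 0) ≤ 2 * B * T * ‖v s‖ := by
    calc _ ≤ 2 * B * ‖v s‖ * ‖s - 0‖ := (le_abs_self _).trans <|
          (convex_Icc 0 T).norm_image_sub_le_of_norm_hasDerivWithin_le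
            (fun r hr ↦ h.hasDerivWithinAt_waveEnergy hsymm hr) hder h₀ hs
      _ ≤ 2 * B * ‖v s‖ * T := by
          gcongr
          rw [sub_zero, Real.norm_of_nonneg hs.1]
          exact hs.2
      _ = 2 * B * T * ‖v s‖ := by ring
  have hsq := sq_norm_le_waveEnergy hL (u s) (v s)
  exact (hmax ht).trans (le_sqrt_add_of_sq_le (by positivity) (by linarith))

lemma norm_fst_le {b : ℝ≥0} (h : SolvesWaveOn L N (Set.Icc 0 T) u v) (hL : (-L).IsPositive)
    (hN : ∀ x, ‖N x‖ ≤ b * ‖x‖) (hbT : 4 * b * T ^ 2 ≤ 1) {t : ℝ} (ht : t ∈ Set.Icc 0 T) :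
    ‖u t‖ ≤ 2 * (‖u 0‖ + T * √(waveEnergy L (u 0) (v 0))) := by
  have h₀ : (0 : ℝ) ∈ Set.Icc 0 T := ⟨le_rfl, ht.1.trans ht.2⟩
  obtain ⟨s, hs, hmax⟩ := isCompact_Icc.exists_isMaxOn ⟨0, h₀⟩ h.continuousOn_fst.norm
  set V := √(waveEnergy L (u 0) (v 0)) + 2 * (b * ‖u s‖) * T with hV
  have hv : ∀ r ∈ Set.Icc 0 T, ‖v r‖ ≤ V := fun r hr ↦
    h.norm_snd_le hL (fun r hr ↦ (hN _).trans (by gcongr; exact hmax hr)) hr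
  have hincr : ‖u s - u 0‖ ≤ V * T := by
    refine ((convex_Icc 0 T).norm_image_sub_le_of_norm_hasDerivWithin_le
      h.hasDerivWithinAt_fst hv h₀ hs).trans ?_
    gcongr
    · exact (norm_nonneg _).trans (hv 0 h₀)
    · rw [sub_zero, Real.norm_of_nonneg hs.1]
      exact hs.2
  have habsorb : 4 * b * T ^ 2 * ‖u s‖ ≤ 1 * ‖u s‖ := by gcongr
  have htri : ‖u s‖ ≤ ‖u 0‖ + ‖u s - u 0‖ := norm_le_norm_add_norm_sub' _ _
  refine (hmax ht).trans ?_
  rw [hV] at hincr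
  linarith

end SolvesWaveOn

lemma isPositive_two_smul_id_sub_add_adjoint [CompleteSpace H] {U : H →L[ℝ] H} (hU : ‖U‖ ≤ 1) :
    ((2 : ℝ) • ContinuousLinearMap.id ℝ H - (U + U.adjoint)).IsPositive := by
  refine (ContinuousLinearMap.isPositive_iff' _).2 ⟨?_, fun x ↦ ?_⟩
  · rw [← ContinuousLinearMap.star_eq_adjoint]
    exact ((IsSelfAdjoint.all (2 : ℝ)).smul (IsSelfAdjoint.one (H →L[ℝ] H))).sub
      (IsSelfAdjoint.add_star_self U)
  · have hcs : ⟪U x, x⟫ ≤ ‖x‖ ^ 2 := by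
      calc ⟪U x, x⟫ ≤ ‖U x‖ * ‖x‖ := real_inner_le_norm _ _
        _ ≤ ‖x‖ * ‖x‖ := by gcongr; simpa using U.le_of_opNorm_le hU x
        _ = ‖x‖ ^ 2 := (sq _).symm
    have hadj : ⟪U.adjoint x, x⟫ = ⟪U x, x⟫ := by
      rw [ContinuousLinearMap.adjoint_inner_left, real_inner_comm]
    simp only [_root_.sub_apply, _root_.add_apply, _root_.smul_apply,
      ContinuousLinearMap.id_apply, inner_sub_left, inner_add_left, real_inner_smul_left, hadj,
      real_inner_self_eq_norm_sq]
    linarith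

end Energy

/-! ### The truncated power -/

section TruncPow

variable {E : Type*} [NormedAddCommGroup E] [NormedSpace ℝ E] {q A : ℝ}

-- The factor `b` makes the constant uniform in `b` also for `q < 1`, where `x ↦ x ^ q` is not
-- Lipschitz at `0`; the inequality is then Bernoulli's for `b / a`.
lemma rpow_sub_rpow_mul_le {a b : ℝ} (hq : 0 ≤ q) (hb : 0 ≤ b) (hba : b ≤ a) :
    (a ^ q - b ^ q) * b ≤ q * a ^ q * (a - b) := by
  rcases hb.eq_or_lt with rfl | hb
  · simp only [mul_zero, sub_zero]
    positivity
  have ha : 0 < a := hb.trans_le hba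
  have bernoulli : 1 + (q + 1) * (b / a - 1) ≤ b ^ q / a ^ q * (b / a) := by
    have h := one_add_mul_self_le_rpow_one_add (s := b / a - 1) (p := q + 1)
      (by linarith [div_pos hb ha]) (by linarith)
    rwa [add_sub_cancel, Real.rpow_add_one (div_pos hb ha).ne', Real.div_rpow hb.le ha.le] at h
  calc (a ^ q - b ^ q) * b = a ^ q * (b - a * (b ^ q / a ^ q * (b / a))) := by
        field_simp
    _ ≤ a ^ q * (b - a * (1 + (q + 1) * (b / a - 1))) := by gcongr
    _ = q * a ^ q * (a - b) := by
        field_simp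
        ring

/-- The power nonlinearity `‖z‖ ^ q • z` with the coefficient frozen at the value `A ^ q` for
`A ≤ ‖z‖`, which makes it globally Lipschitz. -/
def truncPow (q A : ℝ) (z : E) : E :=
  min ‖z‖ A ^ q • z

lemma truncPow_zero (q A : ℝ) : truncPow q A (0 : E) = 0 :=
  smul_zero _

lemma truncPow_of_norm_le {z : E} (hz : ‖z‖ ≤ A) : truncPow q A z = ‖z‖ ^ q • z := by
  rw [truncPow, min_eq_left hz]

lemma norm_truncPow_sub_le (hq : 0 ≤ q) (hA : 0 ≤ A) (z w : E) :
    ‖truncPow q A z - truncPow q A w‖ ≤ (q + 1) * A ^ q * ‖z - w‖ := by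
  wlog hwz : ‖w‖ ≤ ‖z‖ generalizing z w
  · rw [norm_sub_rev, norm_sub_rev z]
    exact this w z (le_of_not_ge hwz)
  have hz₀ : 0 ≤ min ‖z‖ A := le_min (norm_nonneg _) hA
  have hw₀ : 0 ≤ min ‖w‖ A := le_min (norm_nonneg _) hA
  have hle : min ‖w‖ A ≤ min ‖z‖ A := min_le_min_right _ hwz
  have hzA : min ‖z‖ A ^ q ≤ A ^ q := Real.rpow_le_rpow hz₀ (min_le_right _ _) hq
  have hcoeff : (min ‖z‖ A ^ q - min ‖w‖ A ^ q) * ‖w‖ ≤ q * A ^ q * ‖z - w‖ := by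
    rcases le_total ‖w‖ A with hwA | hAw
    · have hdiff : min ‖z‖ A - ‖w‖ ≤ ‖z - w‖ :=
        (sub_le_sub_right (min_le_left _ _) _).trans (norm_sub_norm_le z w)
      rw [min_eq_left hwA] at hle ⊢
      refine (rpow_sub_rpow_mul_le hq (norm_nonneg w) hle).trans ?_
      gcongr
    · rw [min_eq_right hAw, min_eq_right (hAw.trans hwz), sub_self, zero_mul]
      positivity
  calc ‖truncPow q A z - truncPow q A w‖
      = ‖min ‖z‖ A ^ q • (z - w) + (min ‖z‖ A ^ q - min ‖w‖ A ^ q) • w‖ := by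
        rw [truncPow, truncPow, smul_sub, sub_smul, sub_add_sub_cancel]
    _ ≤ min ‖z‖ A ^ q * ‖z - w‖ + (min ‖z‖ A ^ q - min ‖w‖ A ^ q) * ‖w‖ := by
        refine (norm_add_le _ _).trans_eq ?_
        rw [norm_smul, norm_smul, Real.norm_of_nonneg (Real.rpow_nonneg hz₀ q),
          Real.norm_of_nonneg (sub_nonneg.2 (Real.rpow_le_rpow hw₀ hle hq))]
    _ ≤ A ^ q * ‖z - w‖ + q * A ^ q * ‖z - w‖ := by gcongr
    _ = (q + 1) * A ^ q * ‖z - w‖ := by ring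

lemma lipschitzWith_truncPow (hq : 0 ≤ q) (hA : 0 ≤ A) :
    LipschitzWith ((q + 1) * A ^ q).toNNReal (truncPow q A : E → E) :=
  .of_dist_le' fun z w ↦ by simpa only [dist_eq_norm] using norm_truncPow_sub_le hq hA z w

end TruncPow

/-! ### Operators on `ℓ^p` -/

section LpOperators

variable {ι ι' : Type*} {p : ℝ≥0∞}

section Dominated

variable {E F : ι → Type*} [∀ i, NormedAddCommGroup (E i)] [∀ i, NormedAddCommGroup (F i)]

lemma memℓp_of_norm_le_mul {f : lp E p} {g : ∀ i, F i} {C : ℝ} (h : ∀ i, ‖g i‖ ≤ C * ‖f i‖) :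
    Memℓp g p :=
  ((lp.memℓp f).norm.const_mul C).mono h

lemma lp_norm_le_mul (hp : p ≠ 0) {f : lp E p} {g : lp F p} {C : ℝ≥0}
    (h : ∀ i, ‖g i‖ ≤ C * ‖f i‖) : ‖g‖ ≤ C * ‖f‖ := by
  calc ‖g‖ ≤ ‖(C : ℝ) • lp.toNorm f‖ := lp.norm_mono hp fun i ↦ by simpa using h i
    _ = C * ‖f‖ := by rw [lp.norm_const_smul hp, lp.norm_toNorm, NNReal.norm_eq]

/-- The superposition (Nemytskii) operator `f ↦ (i ↦ φ i (f i))` on `ℓ^p`. -/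
def lpSuperposition (p : ℝ≥0∞) (φ : ∀ i, E i → F i) {K : ℝ≥0} (hφ : ∀ i, LipschitzWith K (φ i))
    (hφ₀ : ∀ i, φ i 0 = 0) (f : lp E p) : lp F p :=
  ⟨fun i ↦ φ i (f i), memℓp_of_norm_le_mul fun i ↦ (hφ i).norm_le_mul (hφ₀ i) (f i)⟩

lemma lpSuperposition_apply {φ : ∀ i, E i → F i} {K : ℝ≥0} (hφ : ∀ i, LipschitzWith K (φ i))
    (hφ₀ : ∀ i, φ i 0 = 0) (f : lp E p) (i : ι) : lpSuperposition p φ hφ hφ₀ f i = φ i (f i) :=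
  rfl

lemma norm_lpSuperposition_le (hp : p ≠ 0) {φ : ∀ i, E i → F i} {K : ℝ≥0}
    (hφ : ∀ i, LipschitzWith K (φ i)) (hφ₀ : ∀ i, φ i 0 = 0) (f : lp E p) :
    ‖lpSuperposition p φ hφ hφ₀ f‖ ≤ K * ‖f‖ :=
  lp_norm_le_mul hp fun i ↦ (hφ i).norm_le_mul (hφ₀ i) (f i)

lemma lipschitzWith_lpSuperposition [Fact (1 ≤ p)] {φ : ∀ i, E i → F i} {K : ℝ≥0}
    (hφ : ∀ i, LipschitzWith K (φ i)) (hφ₀ : ∀ i, φ i 0 = 0) :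
    LipschitzWith K (lpSuperposition p φ hφ hφ₀) :=
  .of_dist_le_mul fun f g ↦ by
    rw [dist_eq_norm, dist_eq_norm]
    exact lp_norm_le_mul (zero_lt_one.trans_le Fact.out).ne' fun i ↦ (hφ i).norm_sub_le (f i) (g i)

end Dominated

variable {E : Type*} [NormedAddCommGroup E]

lemma memℓp_comp_injective {f : ι' → E} (hf : Memℓp f p) {σ : ι → ι'}
    (hσ : Function.Injective σ) : Memℓp (f ∘ σ) p := by
  rcases p.trichotomy with rfl | rfl | hp
  · exact memℓp_zero ((memℓp_zero_iff.1 hf).preimage hσ.injOn)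
  · exact memℓp_infty ((memℓp_infty_iff.1 hf).mono
      (Set.range_comp_subset_range σ fun i ↦ ‖f i‖))
  · exact memℓp_gen (((memℓp_gen_iff hp).1 hf).comp_injective hσ)

variable [NormedSpace ℝ E] [Fact (1 ≤ p)]

/-- The composition operator `f ↦ f ∘ σ` on `ℓ^p` for a bijection `σ` of the index sets. -/
def lpCompEquiv (p : ℝ≥0∞) [Fact (1 ≤ p)] (E : Type*) [NormedAddCommGroup E] [NormedSpace ℝ E]
    (σ : ι ≃ ι') : lp (fun _ : ι' ↦ E) p →ₗᵢ[ℝ] lp (fun _ : ι ↦ E) p where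
  toFun f := ⟨f ∘ σ, memℓp_comp_injective (lp.memℓp f) σ.injective⟩
  map_add' _ _ := rfl
  map_smul' _ _ := rfl
  norm_map' f := by
    rcases p.dichotomy with rfl | hp
    · rw [lp.norm_eq_ciSup, lp.norm_eq_ciSup]
      exact σ.iSup_comp (g := fun i ↦ ‖f i‖)
    · have hp₀ : 0 < p.toReal := zero_lt_one.trans_le hp
      rw [lp.norm_eq_tsum_rpow hp₀, lp.norm_eq_tsum_rpow hp₀]
      exact congrArg (· ^ (1 / p.toReal)) (σ.tsum_eq fun i ↦ ‖f i‖ ^ p.toReal)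

/-- The multiplication operator `f ↦ a f` on `ℓ^p` by a bounded real function `a`. -/
def lpMul (p : ℝ≥0∞) [Fact (1 ≤ p)] (E : Type*) [NormedAddCommGroup E] [NormedSpace ℝ E]
    (a : ι → ℝ) {C : ℝ≥0} (ha : ∀ i, ‖a i‖ ≤ C) :
    lp (fun _ : ι ↦ E) p →L[ℝ] lp (fun _ : ι ↦ E) p :=
  lp.mapCLM p (fun i ↦ a i • ContinuousLinearMap.id ℝ E) C.coe_nonneg fun i ↦
    (norm_smul_le _ _).trans <|
      (mul_le_of_le_one_right (norm_nonneg _) ContinuousLinearMap.norm_id_le).trans (ha i)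

lemma norm_lpMul_le {a : ι → ℝ} {C : ℝ≥0} (ha : ∀ i, ‖a i‖ ≤ C) : ‖lpMul p E a ha‖ ≤ C :=
  lp.norm_mapCLM_le ..

end LpOperators

/-! ### The weight `⟨x⟩^k` -/

section Weight

variable {d : ℕ}

lemma one_le_jap (x : Fin d → ℤ) : 1 ≤ jap x := by
  rw [jap, Real.one_le_sqrt]
  exact le_add_of_nonneg_right (Finset.sum_nonneg fun i _ ↦ sq_nonneg _)

lemma jap_pow_pos (k : ℕ) (x : Fin d → ℤ) : 0 < jap x ^ k :=
  pow_pos (zero_lt_one.trans_le (one_le_jap x)) k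

lemma jap_neg (x : Fin d → ℤ) : jap (-x) = jap x := by
  simp [jap]

lemma jap_add_le (x y : Fin d → ℤ) : jap (x + y) ≤ √2 * jap x * jap y := by
  have hsum : ∑ i, (((x + y) i : ℤ) : ℝ) ^ 2 ≤ 2 * ∑ i, (x i : ℝ) ^ 2 + 2 * ∑ i, (y i : ℝ) ^ 2 := by
    rw [Finset.mul_sum, Finset.mul_sum, ← Finset.sum_add_distrib]
    refine Finset.sum_le_sum fun i _ ↦ ?_
    rw [Pi.add_apply, Int.cast_add, ← mul_add]
    exact add_sq_le
  have hx : 0 ≤ ∑ i, (x i : ℝ) ^ 2 := Finset.sum_nonneg fun i _ ↦ sq_nonneg _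
  have hy : 0 ≤ ∑ i, (y i : ℝ) ^ 2 := Finset.sum_nonneg fun i _ ↦ sq_nonneg _
  rw [jap, jap, jap, ← Real.sqrt_mul zero_le_two, ← Real.sqrt_mul (by positivity)]
  refine Real.sqrt_le_sqrt ?_
  nlinarith [mul_nonneg hx hy]

lemma norm_jap_pow_div_le (k : ℕ) (v x : Fin d → ℤ) :
    ‖jap x ^ k / jap (x + v) ^ k‖ ≤ ((√2 * jap v) ^ k).toNNReal := by
  have hx : 0 ≤ jap x := zero_le_one.trans (one_le_jap x)
  have hpeetre := jap_add_le (x + v) (-v)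
  rw [add_neg_cancel_right, jap_neg, mul_right_comm] at hpeetre
  rw [Real.norm_of_nonneg (div_pos (jap_pow_pos k x) (jap_pow_pos k _)).le,
    div_le_iff₀ (jap_pow_pos k _)]
  calc jap x ^ k ≤ (√2 * jap v * jap (x + v)) ^ k := pow_le_pow_left₀ hx hpeetre k
    _ ≤ ((√2 * jap v) ^ k).toNNReal * jap (x + v) ^ k := by
        rw [mul_pow]
        exact mul_le_mul_of_nonneg_right (Real.le_coe_toNNReal _) (jap_pow_pos k _).le

/-- `ℓ²(ℤ^d; ℂ)`, used as a real Hilbert space. -/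
abbrev LatticeL2 (d : ℕ) : Type :=
  lp (fun _ : Fin d → ℤ ↦ ℂ) 2

/-- The map `h ↦ ⟨x⟩^{-k} h` on `ℓ²`. Its image is the space `ℓ^{2,k}`, with `‖h‖` as the
`ℓ^{2,k}` norm of `⟨x⟩^{-k} h`; this is how `ℓ^{2,k}` is represented below. -/
def unweight (d k : ℕ) : LatticeL2 d →L[ℝ] LatticeL2 d :=
  lpMul 2 ℂ (fun x ↦ (jap x ^ k)⁻¹) (C := 1) fun x ↦ by
    rw [norm_inv, Real.norm_of_nonneg (jap_pow_pos k x).le]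
    exact inv_le_one_of_one_le₀ (one_le_pow₀ (one_le_jap x))

lemma unweight_apply (k : ℕ) (h : LatticeL2 d) (x : Fin d → ℤ) :
    unweight d k h x = (jap x ^ k)⁻¹ • h x :=
  rfl

lemma lpn_two_coe (h : LatticeL2 d) : lpn 2 h = ‖h‖ₑ := by
  have h2 : (0 : ℝ) < (2 : ℝ≥0∞).toReal := by norm_num
  rw [lpn, if_neg (by simp), ← ofReal_norm, lp.norm_eq_tsum_rpow h2,
    ← ENNReal.ofReal_rpow_of_nonneg (tsum_nonneg fun x ↦ by positivity) (by norm_num),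
    ENNReal.ofReal_tsum_of_nonneg (fun x ↦ by positivity) (lp.hasSum_norm h2 h).summable]
  congr! 3 with x
  rw [← ENNReal.ofReal_rpow_of_nonneg (norm_nonneg _) h2.le, ofReal_norm, enorm_eq_nnnorm]

lemma w2_unweight (k : ℕ) (h : LatticeL2 d) : w2 k (unweight d k h) = ‖h‖ₑ := by
  rw [← lpn_two_coe, w2]
  congr 1
  funext x
  rw [unweight_apply, ← Complex.real_smul, smul_inv_smul₀ (jap_pow_pos k x).ne']

lemma memℓp_two_of_lpn_lt_top {f : (Fin d → ℤ) → ℂ} (hf : lpn 2 f < ⊤) : Memℓp f 2 := by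
  rw [lpn, if_neg (by simp), ENNReal.rpow_lt_top_iff_of_pos (by norm_num)] at hf
  refine memℓp_gen ((ENNReal.summable_toReal hf.ne).congr fun x ↦ ?_)
  rw [← ENNReal.toReal_rpow, ENNReal.coe_toReal, coe_nnnorm]

lemma exists_unweight_eq {k : ℕ} {f : (Fin d → ℤ) → ℂ} (hf : w2 k f < ⊤) :
    ∃ h : LatticeL2 d, ⇑(unweight d k h) = f := by
  refine ⟨⟨_, memℓp_two_of_lpn_lt_top hf⟩, funext fun x ↦ ?_⟩
  exact inv_smul_smul₀ (jap_pow_pos k x).ne' (f x)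

end Weight

/-! ### The weighted Laplacian and nonlinearity -/

section WeightedOperators

variable {d : ℕ} (k : ℕ)

/-- The translation `f ↦ f(· + v)` conjugated by the weight: `⟨x⟩^k ⟨x + v⟩^{-k} f(x + v)`. -/
def weightedTranslation (v : Fin d → ℤ) : LatticeL2 d →L[ℝ] LatticeL2 d :=
  lpMul 2 ℂ _ (norm_jap_pow_div_le k v) ∘L
    (lpCompEquiv 2 ℂ (Equiv.addRight v)).toContinuousLinearMap

lemma weightedTranslation_apply (v : Fin d → ℤ) (f : LatticeL2 d) (x : Fin d → ℤ) :
    weightedTranslation k v f x = (jap x ^ k / jap (x + v) ^ k) • f (x + v) :=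
  rfl

lemma norm_weightedTranslation_zero_le (v : Fin d → ℤ) : ‖weightedTranslation 0 v‖ ≤ 1 := by
  refine (ContinuousLinearMap.opNorm_comp_le _ _).trans (mul_le_one₀ ?_ (norm_nonneg _)
    (LinearIsometry.norm_toContinuousLinearMap_le _))
  exact (norm_lpMul_le _).trans (by simp)

lemma adjoint_weightedTranslation_zero (v : Fin d → ℤ) :
    (weightedTranslation 0 v).adjoint = weightedTranslation 0 (-v) := by
  refine ((ContinuousLinearMap.eq_adjoint_iff _ _).2 fun f g ↦ ?_).symm
  rw [lp.inner_eq_tsum, lp.inner_eq_tsum, ← (Equiv.addRight v).tsum_eq]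
  simp [weightedTranslation_apply]

/-- The discrete Laplacian conjugated by the weight, `⟨x⟩^k Δ ⟨x⟩^{-k}`; see
`weightedLap_apply`. -/
def weightedLap (d k : ℕ) : LatticeL2 d →L[ℝ] LatticeL2 d :=
  ∑ j, (weightedTranslation k (Pi.single j 1) + weightedTranslation k (-Pi.single j 1)
    - (2 : ℝ) • .id ℝ (LatticeL2 d))

lemma weightedLap_apply (f : LatticeL2 d) (x : Fin d → ℤ) :
    weightedLap d k f x = jap x ^ k • lap (unweight d k f) x := by
  simp only [weightedLap, lap, _root_.sum_apply, lp.coeFn_sum, Finset.sum_apply, Finset.smul_sum,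
    _root_.sub_apply, _root_.add_apply, _root_.smul_apply, ContinuousLinearMap.id_apply,
    lp.coeFn_sub, lp.coeFn_add, lp.coeFn_smul, Pi.sub_apply, Pi.add_apply, Pi.smul_apply,
    weightedTranslation_apply, unweight_apply, div_eq_mul_inv, mul_smul, smul_sub, smul_add,
    ← sub_eq_add_neg]
  refine Finset.sum_congr rfl fun j _ ↦ ?_
  rw [mul_smul_comm, smul_inv_smul₀ (jap_pow_pos k x).ne', two_smul, two_mul]

lemma lap_unweight (f : LatticeL2 d) : lap (unweight d k f) = unweight d k (weightedLap d k f) := by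
  funext x
  rw [unweight_apply, weightedLap_apply, inv_smul_smul₀ (jap_pow_pos k x).ne']

lemma unweight_zero (f : LatticeL2 d) : unweight d 0 f = f := by
  ext x
  simp [unweight_apply]

lemma unweight_weightedLap (f : LatticeL2 d) :
    unweight d k (weightedLap d k f) = weightedLap d 0 (unweight d k f) := by
  ext x
  rw [← lap_unweight, weightedLap_apply, unweight_zero, pow_zero, one_smul]

lemma isPositive_neg_weightedLap_zero (d : ℕ) : (-weightedLap d 0).IsPositive := by
  rw [weightedLap, ← Finset.sum_neg_distrib]
  refine ContinuousLinearMap.isPositive_sum _ fun j _ ↦ ?_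
  rw [neg_sub, ← adjoint_weightedTranslation_zero]
  exact isPositive_two_smul_id_sub_add_adjoint (norm_weightedTranslation_zero_le _)

lemma lipschitzWith_smul_comp_inv_smul {E : Type*} [NormedAddCommGroup E] [NormedSpace ℝ E]
    {φ : E → E} {K : ℝ≥0} (hφ : LipschitzWith K φ) (w : ℝ) :
    LipschitzWith K fun z ↦ w • φ (w⁻¹ • z) := by
  refine ((lipschitzWith_smul w).comp (hφ.comp (lipschitzWith_smul w⁻¹))).weaken ?_
  rw [mul_left_comm, nnnorm_inv]
  exact mul_le_of_le_one_right' mul_inv_le_one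

variable {φ : ℂ → ℂ} {K : ℝ≥0}

/-- The nonlinearity `f ↦ φ ∘ f` conjugated by the weight: `⟨x⟩^k φ(⟨x⟩^{-k} f(x))`. -/
def weightedSuperposition (hφ : LipschitzWith K φ) (hφ₀ : φ 0 = 0) : LatticeL2 d → LatticeL2 d :=
  lpSuperposition 2 (fun x z ↦ jap x ^ k • φ ((jap x ^ k)⁻¹ • z))
    (fun _ ↦ lipschitzWith_smul_comp_inv_smul hφ _) fun x ↦ by rw [smul_zero, hφ₀, smul_zero]

lemma lipschitzWith_weightedSuperposition (hφ : LipschitzWith K φ) (hφ₀ : φ 0 = 0) :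
    LipschitzWith K (weightedSuperposition (d := d) k hφ hφ₀) :=
  lipschitzWith_lpSuperposition _ _

lemma unweight_weightedSuperposition (hφ : LipschitzWith K φ) (hφ₀ : φ 0 = 0) (f : LatticeL2 d) :
    unweight d k (weightedSuperposition k hφ hφ₀ f) =
      lpSuperposition 2 (fun _ ↦ φ) (fun _ ↦ hφ) (fun _ ↦ hφ₀) (unweight d k f) := by
  ext x
  exact inv_smul_smul₀ (jap_pow_pos k x).ne' _

end WeightedOperators

/-! ### Solutions in `ℓ^{2,k}` -/

section WeightedCurves

variable {d k : ℕ} {S : Set ℝ}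

lemma contW_unweight {X : ℝ → LatticeL2 d} (hX : ContinuousOn X S) :
    ContW k S fun t ↦ unweight d k (X t) := by
  intro t ht
  have hw2 : ∀ s, w2 k (fun x ↦ unweight d k (X s) x - unweight d k (X t) x) = ‖X s - X t‖ₑ :=
    fun s ↦ by
      rw [← w2_unweight k, map_sub]
      rfl
  simp only [hw2]
  simpa [ContinuousWithinAt] using
    ((hX t ht).sub (continuousWithinAt_const (b := X t))).enorm

lemma derivW_unweight {X X' : ℝ → LatticeL2 d} (hX : ∀ t ∈ S, HasDerivWithinAt X (X' t) S t) :
    DerivW k S (fun t ↦ unweight d k (X t)) fun t ↦ unweight d k (X' t) := by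
  intro t ht
  have hw2 : ∀ s, w2 k (fun x ↦ (s - t)⁻¹ • (unweight d k (X s) x - unweight d k (X t) x)
      - unweight d k (X' t) x) = ‖slope X t s - X' t‖ₑ := fun s ↦ by
    rw [← w2_unweight k, slope_def_module, map_sub, map_smul, map_sub]
    rfl
  simp only [hw2]
  simpa using ((hasDerivWithinAt_iff_tendsto_slope.1 (hX t ht)).sub_const (X' t)).enorm

lemma isC2_unweight {U V W : ℝ → LatticeL2 d} (hU : ∀ t ∈ S, HasDerivWithinAt U (V t) S t)
    (hV : ∀ t ∈ S, HasDerivWithinAt V (W t) S t) (hW : ContinuousOn W S) :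
    IsC2 k S (fun t ↦ unweight d k (U t)) (fun t ↦ unweight d k (V t))
      fun t ↦ unweight d k (W t) := by
  have hmem : ∀ h : LatticeL2 d, w2 k (unweight d k h) < ⊤ := fun h ↦ by
    rw [w2_unweight]
    exact enorm_lt_top
  exact ⟨fun _ _ ↦ hmem _, fun _ _ ↦ hmem _, fun _ _ ↦ hmem _,
    contW_unweight fun t ht ↦ (hU t ht).continuousWithinAt,
    contW_unweight fun t ht ↦ (hV t ht).continuousWithinAt, contW_unweight hW,
    derivW_unweight hU, derivW_unweight hV⟩

variable {φ : ℂ → ℂ} {K : ℝ≥0} {hφ : LipschitzWith K φ} {hφ₀ : φ 0 = 0} {u v : ℝ → LatticeL2 d}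

lemma SolvesWaveOn.isC2_unweight
    (h : SolvesWaveOn (weightedLap d k) (weightedSuperposition k hφ hφ₀) S u v) :
    IsC2 k S (fun t ↦ unweight d k (u t)) (fun t ↦ unweight d k (v t))
      fun t ↦ unweight d k (weightedLap d k (u t) + weightedSuperposition k hφ hφ₀ (u t)) :=
  _root_.isC2_unweight h.hasDerivWithinAt_fst h.hasDerivWithinAt_snd <|
    ((weightedLap d k).continuous.comp_continuousOn h.continuousOn_fst).add
      ((lipschitzWith_weightedSuperposition k hφ hφ₀).continuous.comp_continuousOn
        h.continuousOn_fst)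

lemma SolvesWaveOn.norm_unweight_le {T : ℝ}
    (h : SolvesWaveOn (weightedLap d k) (weightedSuperposition k hφ hφ₀) (Set.Icc 0 T) u v)
    (hKT : 4 * K * T ^ 2 ≤ 1) {t : ℝ} (ht : t ∈ Set.Icc 0 T) :
    ‖unweight d k (u t)‖ ≤ 2 * (‖unweight d k (u 0)‖ +
      T * √(waveEnergy (weightedLap d 0) (unweight d k (u 0)) (unweight d k (v 0)))) :=
  (h.map (unweight d k) (unweight_weightedLap k)
    (unweight_weightedSuperposition k hφ hφ₀)).norm_fst_le (isPositive_neg_weightedLap_zero d)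
    (norm_lpSuperposition_le two_ne_zero _ _) hKT ht

/-- The energy estimate keeps the solution of the truncated equation below the height `A`, where
the truncation is inactive. -/
theorem exists_pSol_unweight {p A T : ℝ} (hp : 1 ≤ p) (hA : 0 ≤ A) (μ : ℝ) (f g : LatticeL2 d)
    (hfg : 2 * (‖unweight d k f‖ +
      T * √(waveEnergy (weightedLap d 0) (unweight d k f) (unweight d k g))) ≤ A)
    (hT : 4 * (|μ| * p * A ^ (p - 1)) * T ^ 2 ≤ 1) :
    ∃ u u1 u2, PSol d k p μ (unweight d k f) (unweight d k g) (Set.Icc 0 T) u u1 u2 := by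
  set φ : ℂ → ℂ := fun z ↦ μ • truncPow (p - 1) A z
  have hφ : LipschitzWith (|μ| * p * A ^ (p - 1)).toNNReal φ := by
    have hK : (|μ| * p * A ^ (p - 1)).toNNReal
        = ‖μ‖₊ * ((p - 1 + 1) * A ^ (p - 1)).toNNReal := by
      rw [mul_assoc, Real.toNNReal_mul (abs_nonneg μ), sub_add_cancel, Real.toNNReal_abs]
      rfl
    exact hK ▸ (lipschitzWith_smul μ).comp (lipschitzWith_truncPow (sub_nonneg.2 hp) hA)
  have hφ₀ : φ 0 = 0 := by
    rw [show φ 0 = μ • truncPow (p - 1) A 0 from rfl, truncPow_zero, smul_zero]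
  obtain ⟨u, v, hwave, rfl, rfl⟩ := exists_solvesWaveOn_Icc (weightedLap d k)
    (lipschitzWith_weightedSuperposition k hφ hφ₀) f g T
  have hbound : ∀ t ∈ Set.Icc 0 T, ∀ x, ‖unweight d k (u t) x‖ ≤ A := fun t ht x ↦
    (lp.norm_apply_le_norm two_ne_zero _ x).trans <|
      (hwave.norm_unweight_le (by rwa [Real.coe_toNNReal _ (by positivity)]) ht).trans hfg
  refine ⟨_, _, _, hwave.isC2_unweight, fun t ht x ↦ ?_, fun _ ↦ rfl, fun _ ↦ rfl⟩
  rw [map_add, lap_unweight, unweight_weightedSuperposition, lp.coeFn_add, Pi.add_apply,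
    add_sub_cancel_left, lpSuperposition_apply]
  change μ • truncPow (p - 1) A _ = _
  rw [truncPow_of_norm_le (hbound t ht x), Complex.real_smul, Complex.real_smul, mul_assoc]

end WeightedCurves

/-! ### The lifespan -/

section Lifespan

variable {p ε : ℝ}

lemma mul_rpow_mul_sq_eq_one (hp : p + 1 ≠ 0) (hε : 0 < ε) :
    (ε * (1 / ε) ^ ((p - 1) / (p + 1))) ^ (p - 1) * ((1 / ε) ^ ((p - 1) / (p + 1))) ^ 2 = 1 := by
  set R : ℝ := (1 / ε) ^ ((p - 1) / (p + 1)) with hR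
  have hR₀ : 0 < R := by positivity
  calc (ε * R) ^ (p - 1) * R ^ 2 = ε ^ (p - 1) * R ^ (p + 1) := by
        rw [Real.mul_rpow hε.le hR₀.le, mul_assoc, ← Real.rpow_add_natCast hR₀.ne']
        congr 2
        push_cast
        ring
    _ = ε ^ (p - 1) * (1 / ε) ^ (p - 1) := by
        rw [hR, ← Real.rpow_mul (by positivity), div_mul_cancel₀ _ hp]
    _ = 1 := by
        rw [← Real.mul_rpow hε.le (by positivity), mul_one_div_cancel hε.ne', Real.one_rpow]

lemma exists_lifespan_constant {a b c : ℝ} (hp : 1 ≤ p) (ha : 0 ≤ a) (hb : 0 ≤ b) (hc : 0 ≤ c) :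
    ∃ K : ℝ, 0 < K ∧ ∀ ε : ℝ, 0 < ε → ε < 1 → ∀ T : ℝ, 0 < T →
      T < K * (1 / ε) ^ ((p - 1) / (p + 1)) →
        ∃ A : ℝ, 0 ≤ A ∧ 2 * (ε * a + T * (ε * b)) ≤ A ∧ 4 * (c * A ^ (p - 1)) * T ^ 2 ≤ 1 := by
  set B : ℝ := 2 * (a + b)
  set Q : ℝ := c * B ^ (p - 1)
  have hQ : 0 ≤ Q := by positivity
  set K : ℝ := 1 / (2 * (1 + Q)) with hK
  have hK₁ : K ≤ 1 := (div_le_one (by positivity)).2 (by linarith)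
  have hQK : 4 * Q * K ^ 2 ≤ 1 := by
    rw [hK, div_pow, one_pow, mul_one_div, div_le_one (by positivity)]
    nlinarith [sq_nonneg Q]
  refine ⟨K, by positivity, fun ε hε hε₁ T hT hTK ↦ ?_⟩
  have hscale := mul_rpow_mul_sq_eq_one (p := p) (by linarith) hε
  set R : ℝ := (1 / ε) ^ ((p - 1) / (p + 1))
  have hR₁ : 1 ≤ R := Real.one_le_rpow ((one_le_div hε).2 hε₁.le)
    (div_nonneg (by linarith) (by linarith))
  have hTR : T ≤ R := hTK.le.trans (mul_le_of_le_one_left (by positivity) hK₁)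
  refine ⟨B * (ε * R), by positivity, ?_, ?_⟩
  · have ha' : ε * a ≤ R * (ε * a) := le_mul_of_one_le_left (by positivity) hR₁
    calc 2 * (ε * a + T * (ε * b)) ≤ 2 * (R * (ε * a) + R * (ε * b)) := by gcongr 2 * (?_ + ?_ * _)
      _ = B * (ε * R) := by ring
  · calc 4 * (c * (B * (ε * R)) ^ (p - 1)) * T ^ 2
        ≤ 4 * (c * (B * (ε * R)) ^ (p - 1)) * (K * R) ^ 2 := by gcongr
      _ = 4 * Q * K ^ 2 * ((ε * R) ^ (p - 1) * R ^ 2) := by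
          rw [Real.mul_rpow (by positivity) (by positivity)]
          ring
      _ ≤ 1 := by rwa [hscale, mul_one]

end Lifespan

theorem stmt15_general (d k : ℕ) (p μ : ℝ) (hp : 1 ≤ p) (f g : (Fin d → ℤ) → ℂ)
    (hf : w2 k f < ⊤) (hg : w2 k g < ⊤) :
    ∃ K : ℝ, 0 < K ∧ ∃ δ : ℝ, 0 < δ ∧
      ∀ ε : ℝ, 0 < ε → ε < δ →
        ∀ T : ℝ, 0 < T → T < K * (1 / ε) ^ ((p - 1) / (p + 1)) →
          ∃ u u1 u2,
            PSol d k p μ (fun m => (ε : ℂ) * f m) (fun m => (ε : ℂ) * g m)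
              (Set.Icc 0 T) u u1 u2 := by
  obtain ⟨f, rfl⟩ := exists_unweight_eq hf
  obtain ⟨g, rfl⟩ := exists_unweight_eq hg
  set E₀ := waveEnergy (weightedLap d 0) (unweight d k f) (unweight d k g)
  obtain ⟨K, hK, hlifespan⟩ := exists_lifespan_constant hp (norm_nonneg (unweight d k f))
    (Real.sqrt_nonneg E₀) (show 0 ≤ |μ| * p by positivity)
  refine ⟨K, hK, 1, one_pos, fun ε hε hε₁ T hT hTK ↦ ?_⟩
  obtain ⟨A, hA, hεA, hTA⟩ := hlifespan ε hε hε₁ T hT hTK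
  have hdata : ∀ h : LatticeL2 d, (fun m ↦ (ε : ℂ) * unweight d k h m) = unweight d k (ε • h) :=
    fun h ↦ by
      rw [map_smul]
      rfl
  rw [hdata, hdata]
  refine exists_pSol_unweight hp hA μ (ε • f) (ε • g) ?_ hTA
  rwa [map_smul, map_smul, waveEnergy_smul, Real.sqrt_mul (sq_nonneg ε), Real.sqrt_sq hε.le,
    norm_smul, Real.norm_of_nonneg hε.le]

/-- for the focusing equation `∂ₜ²u - Δu = |u|^{p-1}u` with small data
`εf, εg`, the maximal existence time satisfies `T*(ε) ≥ K·(1/ε)^{(p-1)/(p+1)}`,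
i.e. a classical solution exists on `[0,T]` for every `T < K·(1/ε)^{(p-1)/(p+1)}`. -/
theorem stmt15 (d : ℕ) (hd : 0 < d) (k : ℕ) (hk : k = 0 ∨ k = 1) (p : ℝ) (hp : 1 < p)
    (f g : (Fin d → ℤ) → ℂ) (hf : w2 k f < ⊤) (hg : w2 k g < ⊤) :
    ∃ K : ℝ, 0 < K ∧ ∃ δ : ℝ, 0 < δ ∧
      ∀ ε : ℝ, 0 < ε → ε < δ →
        ∀ T : ℝ, 0 < T → T < K * (1 / ε) ^ ((p - 1) / (p + 1)) →
          ∃ u u1 u2,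
            PSol d k p 1 (fun m => (ε : ℂ) * f m) (fun m => (ε : ℂ) * g m)
              (Set.Icc 0 T) u u1 u2 :=
  stmt15_general d k p 1 hp.le f g hf hg
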